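/- For every admissible curve γ(x) = (x, y(x), z(x)) in G¹₃, the fourth derivative of γ with respect to arclength satisfies γ''''(x) = ρ(x)⁻⁴·[(2𝒦(x)² + 𝒯(x)² − 𝒦°(x))·N(x) + (𝒯°(x) − 3𝒦(x)𝒯(x))·B(x)] for all x ∈ I, where f° = ρ·f' denotes differentiation with respect to the equiform parameter. -/

import Mathlib

noncomputable section

open Real

/-- Model of the pseudo-Galilean space `G¹₃` as `ℝ³`. -/
abbrev V3 := ℝ × ℝ × ℝ

/-- The pseudo-Galilean scalar product on `ℝ³`. -/
def pgInner (u v : V3) : ℝ :=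
  if u.1 ≠ 0 ∨ v.1 ≠ 0 then u.1 * v.1 else u.2.1 * v.2.1 - u.2.2 * v.2.2

/-- Curvature of the admissible curve `x ↦ (x, y x, z x)`. -/
def curv (y z : ℝ → ℝ) (x : ℝ) : ℝ :=
  Real.sqrt |(deriv (deriv y) x) ^ 2 - (deriv (deriv z) x) ^ 2|

/-- Torsion of the admissible curve `x ↦ (x, y x, z x)`. -/
def tors (y z : ℝ → ℝ) (x : ℝ) : ℝ :=
  (deriv (deriv y) x * deriv (deriv (deriv z)) x -
    deriv (deriv (deriv y)) x * deriv (deriv z) x) / (curv y z x) ^ 2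

/-- Radius of curvature `ρ = 1/κ`. -/
def rho (y z : ℝ → ℝ) (x : ℝ) : ℝ := 1 / curv y z x

/-- Equiform curvature `𝒦 = ρ'`. -/
def eqK (y z : ℝ → ℝ) (x : ℝ) : ℝ := deriv (rho y z) x

/-- Equiform torsion `𝒯 = ρ·τ`. -/
def eqT (y z : ℝ → ℝ) (x : ℝ) : ℝ := rho y z x * tors y z x

/-- Frenet tangent `e₁ = (1, y', z')`. -/
def e1 (y z : ℝ → ℝ) (x : ℝ) : V3 := (1, deriv y x, deriv z x)

/-- Frenet principal normal `e₂ = (1/κ)(0, y'', z'')`. -/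
def e2 (y z : ℝ → ℝ) (x : ℝ) : V3 :=
  (0, deriv (deriv y) x / curv y z x, deriv (deriv z) x / curv y z x)

/-- Frenet binormal `e₃ = (1/κ)(0, ε·z'', ε·y'')`. -/
def e3 (y z : ℝ → ℝ) (ε : ℝ) (x : ℝ) : V3 :=
  (0, ε * deriv (deriv z) x / curv y z x, ε * deriv (deriv y) x / curv y z x)

/-- Equiform tangent `T = ρ·e₁`. -/
def Tv (y z : ℝ → ℝ) (x : ℝ) : V3 := rho y z x • e1 y z x

/-- Equiform principal normal `N = ρ·e₂`. -/
def Nv (y z : ℝ → ℝ) (x : ℝ) : V3 := rho y z x • e2 y z x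

/-- Equiform binormal `B = ρ·e₃`. -/
def Bv (y z : ℝ → ℝ) (ε : ℝ) (x : ℝ) : V3 := rho y z x • e3 y z ε x

/-- Derivative with respect to the equiform parameter: `f° = ρ·f'`. -/
def eqD {E : Type*} [NormedAddCommGroup E] [NormedSpace ℝ E]
    (y z : ℝ → ℝ) (f : ℝ → E) (x : ℝ) : E := rho y z x • deriv f x

/-- `Q₁ = ρ⁻²·N`. -/
def Q1 (y z : ℝ → ℝ) (x : ℝ) : V3 := ((rho y z x) ^ (-2 : ℤ)) • Nv y z x

/-- `Q₂ = ρ⁻³·(−𝒦N + 𝒯B)`. -/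
def Q2 (y z : ℝ → ℝ) (ε : ℝ) (x : ℝ) : V3 :=
  ((rho y z x) ^ (-3 : ℤ)) • ((-(eqK y z x)) • Nv y z x + (eqT y z x) • Bv y z ε x)

/-- `Q₃ = ρ⁻⁴·[(2𝒦² + 𝒯² − 𝒦°)N + (𝒯° − 3𝒦𝒯)B]`. -/
def Q3 (y z : ℝ → ℝ) (ε : ℝ) (x : ℝ) : V3 :=
  ((rho y z x) ^ (-4 : ℤ)) •
    ((2 * (eqK y z x) ^ 2 + (eqT y z x) ^ 2 - eqD y z (eqK y z) x) • Nv y z x +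
      (eqD y z (eqT y z) x - 3 * eqK y z x * eqT y z x) • Bv y z ε x)

/-!
Writing `κ² = ε(y''² - z''²)`, Lagrange's identity turns the derivatives of `y''/κ` and `z''/κ` into
the Frenet formulas `e₂' = τ e₃`, `e₃' = τ e₂`. Multiplying the frame by `ρ` adds the logarithmic
derivative of `ρ`: `N° = 𝒦N + 𝒯B`, `B° = 𝒯N + 𝒦B`. Hence
`(ρⁿ(fN + gB))' = ρⁿ⁻¹((f° + (n+1)𝒦f + 𝒯g)N + (g° + (n+1)𝒦g + 𝒯f)B)`,
and this rule, applied twice to `γ'' = ρ⁻²N`, gives `γ'''` and `γ''''`.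
-/

section FourthDerivative

open Filter Topology

variable {y z : ℝ → ℝ} {ε x : ℝ}

lemma contDiffAt_deriv_deriv {𝕜 E : Type*} [NontriviallyNormedField 𝕜] [NormedAddCommGroup E]
    [NormedSpace 𝕜 E] {f : 𝕜 → E} {a : 𝕜} {m n : WithTop ℕ∞} (hf : ContDiffAt 𝕜 n f a)
    (hmn : m + 2 ≤ n) : ContDiffAt 𝕜 m (deriv (deriv f)) a :=
  (hf.derivWithin (m := m + 1) (by rwa [add_assoc, one_add_one_eq_two])).derivWithin le_rfl

/-- The curve `t ↦ (t, y t, z t)` is admissible at `t = x`, and `ε = ±1` is the sign of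
`y''² - z''²` there. Differentiability is not part of this pointwise condition; it is assumed
separately, to the order needed. -/
structure IsAdmissibleAt (y z : ℝ → ℝ) (ε x : ℝ) : Prop where
  sign_eq : ε = 1 ∨ ε = -1
  pos : 0 < ε * (deriv (deriv y) x ^ 2 - deriv (deriv z) x ^ 2)

lemma curv_comm (y z : ℝ → ℝ) : curv y z = curv z y :=
  funext fun t => by rw [curv, curv, abs_sub_comm]

lemma tors_comm (y z : ℝ → ℝ) (x : ℝ) : tors z y x = -tors y z x := by
  rw [tors, tors, curv_comm z y]
  ring

lemma e3_eq_smul (y z : ℝ → ℝ) (ε : ℝ) :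
    e3 y z ε = fun t => ε • ((0, deriv (deriv z) t / curv y z t,
      deriv (deriv y) t / curv y z t) : V3) := by
  ext t <;> simp [e3, mul_div_assoc]

namespace IsAdmissibleAt

lemma swap (h : IsAdmissibleAt y z ε x) : IsAdmissibleAt z y (-ε) x where
  sign_eq := by simpa [neg_eq_iff_eq_neg, or_comm] using h.sign_eq
  pos := by linear_combination h.pos

lemma sign_sq (h : IsAdmissibleAt y z ε x) : ε ^ 2 = 1 :=
  sq_eq_one_iff.2 h.sign_eq

lemma curv_eq_sqrt (h : IsAdmissibleAt y z ε x) :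
    curv y z x = √(ε * (deriv (deriv y) x ^ 2 - deriv (deriv z) x ^ 2)) := by
  have hε : |ε| = 1 := (abs_eq zero_le_one).2 h.sign_eq
  rw [curv, ← abs_of_pos h.pos, abs_mul, hε, one_mul]

lemma curv_pos (h : IsAdmissibleAt y z ε x) : 0 < curv y z x :=
  h.curv_eq_sqrt ▸ Real.sqrt_pos.2 h.pos

lemma curv_sq (h : IsAdmissibleAt y z ε x) :
    curv y z x ^ 2 = ε * (deriv (deriv y) x ^ 2 - deriv (deriv z) x ^ 2) := by
  rw [h.curv_eq_sqrt, Real.sq_sqrt h.pos.le]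

lemma rho_ne_zero (h : IsAdmissibleAt y z ε x) : rho y z x ≠ 0 :=
  one_div_ne_zero h.curv_pos.ne'

lemma eventually (h : IsAdmissibleAt y z ε x) (hy : ContinuousAt (deriv (deriv y)) x)
    (hz : ContinuousAt (deriv (deriv z)) x) : ∀ᶠ t in 𝓝 x, IsAdmissibleAt y z ε t :=
  ((continuousAt_const.mul ((hy.pow 2).sub (hz.pow 2))).eventually_const_lt h.pos).mono
    fun _ ht => ⟨h.sign_eq, ht⟩

lemma curv_eventuallyEq (h : IsAdmissibleAt y z ε x) (hy : ContinuousAt (deriv (deriv y)) x)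
    (hz : ContinuousAt (deriv (deriv z)) x) :
    curv y z =ᶠ[𝓝 x] fun t => √(ε * (deriv (deriv y) t ^ 2 - deriv (deriv z) t ^ 2)) :=
  (h.eventually hy hz).mono fun _ ht => ht.curv_eq_sqrt

lemma contDiffAt_curv {n : WithTop ℕ∞} (h : IsAdmissibleAt y z ε x)
    (hy : ContDiffAt ℝ n (deriv (deriv y)) x) (hz : ContDiffAt ℝ n (deriv (deriv z)) x) :
    ContDiffAt ℝ n (curv y z) x :=
  ((contDiffAt_const.mul ((hy.pow 2).sub (hz.pow 2))).sqrt h.pos.ne').congr_of_eventuallyEq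
    (h.curv_eventuallyEq hy.continuousAt hz.continuousAt)

lemma contDiffAt_rho {n : WithTop ℕ∞} (h : IsAdmissibleAt y z ε x)
    (hy : ContDiffAt ℝ n (deriv (deriv y)) x) (hz : ContDiffAt ℝ n (deriv (deriv z)) x) :
    ContDiffAt ℝ n (rho y z) x :=
  contDiffAt_const.div (h.contDiffAt_curv hy hz) h.curv_pos.ne'

lemma hasDerivAt_curv (h : IsAdmissibleAt y z ε x)
    (hy : DifferentiableAt ℝ (deriv (deriv y)) x) (hz : DifferentiableAt ℝ (deriv (deriv z)) x) :
    HasDerivAt (curv y z)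
      (ε * (deriv (deriv y) x * deriv (deriv (deriv y)) x -
        deriv (deriv z) x * deriv (deriv (deriv z)) x) / curv y z x) x := by
  have hsq := ((hy.hasDerivAt.pow 2).sub (hz.hasDerivAt.pow 2)).const_mul ε
  refine ((hsq.sqrt h.pos.ne').congr_of_eventuallyEq
    (h.curv_eventuallyEq hy.continuousAt hz.continuousAt)).congr_deriv ?_
  simp only [Pi.sub_apply, Pi.pow_apply, ← h.curv_eq_sqrt]
  have hκ := h.curv_pos.ne'
  field_simp
  ring

lemma hasDerivAt_left_div_curv (h : IsAdmissibleAt y z ε x)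
    (hy : DifferentiableAt ℝ (deriv (deriv y)) x) (hz : DifferentiableAt ℝ (deriv (deriv z)) x) :
    HasDerivAt (fun t => deriv (deriv y) t / curv y z t)
      (tors y z x * (ε * deriv (deriv z) x / curv y z x)) x := by
  have hκ := h.curv_pos.ne'
  refine (hy.hasDerivAt.fun_div (h.hasDerivAt_curv hy hz) hκ).congr_deriv ?_
  rw [tors]
  field_simp
  linear_combination deriv (deriv (deriv y)) x * h.curv_sq

lemma hasDerivAt_right_div_curv (h : IsAdmissibleAt y z ε x)
    (hy : DifferentiableAt ℝ (deriv (deriv y)) x) (hz : DifferentiableAt ℝ (deriv (deriv z)) x) :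
    HasDerivAt (fun t => deriv (deriv z) t / curv y z t)
      (tors y z x * (ε * deriv (deriv y) x / curv y z x)) x := by
  simpa [curv_comm z y, tors_comm y z, neg_div] using h.swap.hasDerivAt_left_div_curv hz hy

theorem hasDerivAt_e2 (h : IsAdmissibleAt y z ε x)
    (hy : DifferentiableAt ℝ (deriv (deriv y)) x) (hz : DifferentiableAt ℝ (deriv (deriv z)) x) :
    HasDerivAt (e2 y z) (tors y z x • e3 y z ε x) x := by
  refine ((hasDerivAt_const x (0 : ℝ)).prodMk ((h.hasDerivAt_left_div_curv hy hz).prodMk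
    (h.hasDerivAt_right_div_curv hy hz))).congr_deriv ?_
  simp [e3]

theorem hasDerivAt_e3 (h : IsAdmissibleAt y z ε x)
    (hy : DifferentiableAt ℝ (deriv (deriv y)) x) (hz : DifferentiableAt ℝ (deriv (deriv z)) x) :
    HasDerivAt (e3 y z ε) (tors y z x • e2 y z x) x := by
  rw [e3_eq_smul]
  refine (((hasDerivAt_const x (0 : ℝ)).prodMk ((h.hasDerivAt_right_div_curv hy hz).prodMk
    (h.hasDerivAt_left_div_curv hy hz))).const_smul ε).congr_deriv ?_
  have hε (a : ℝ) : ε * (tors y z x * (ε * a / curv y z x)) = tors y z x * (a / curv y z x) := by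
    linear_combination tors y z x * (a / curv y z x) * h.sign_sq
  simp [e2, hε]

lemma hasDerivAt_rho (h : IsAdmissibleAt y z ε x)
    (hy : DifferentiableAt ℝ (deriv (deriv y)) x) (hz : DifferentiableAt ℝ (deriv (deriv z)) x) :
    HasDerivAt (rho y z) (eqK y z x) x :=
  ((differentiableAt_const 1).div (h.hasDerivAt_curv hy hz).differentiableAt
    h.curv_pos.ne').hasDerivAt

lemma differentiableAt_eqK (h : IsAdmissibleAt y z ε x)
    (hy : ContDiffAt ℝ 2 (deriv (deriv y)) x) (hz : ContDiffAt ℝ 2 (deriv (deriv z)) x) :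
    DifferentiableAt ℝ (eqK y z) x :=
  ((h.contDiffAt_rho hy hz).derivWithin (m := 1) (by norm_num)).differentiableAt one_ne_zero

lemma differentiableAt_eqT (h : IsAdmissibleAt y z ε x)
    (hy : ContDiffAt ℝ 2 (deriv (deriv y)) x) (hz : ContDiffAt ℝ 2 (deriv (deriv z)) x) :
    DifferentiableAt ℝ (eqT y z) x := by
  have hy₂ := hy.differentiableAt two_ne_zero
  have hz₂ := hz.differentiableAt two_ne_zero
  have hy₃ := (hy.derivWithin (m := 1) (by norm_num)).differentiableAt one_ne_zero
  have hz₃ := (hz.derivWithin (m := 1) (by norm_num)).differentiableAt one_ne_zero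
  have hκ := (h.hasDerivAt_curv hy₂ hz₂).differentiableAt
  exact (h.hasDerivAt_rho hy₂ hz₂).differentiableAt.mul
    (((hy₂.mul hz₃).sub (hy₃.mul hz₂)).div (hκ.pow 2) (pow_ne_zero 2 h.curv_pos.ne'))

theorem hasDerivAt_Nv (h : IsAdmissibleAt y z ε x)
    (hy : DifferentiableAt ℝ (deriv (deriv y)) x) (hz : DifferentiableAt ℝ (deriv (deriv z)) x) :
    HasDerivAt (Nv y z)
      ((rho y z x)⁻¹ • (eqK y z x • Nv y z x + eqT y z x • Bv y z ε x)) x := by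
  refine ((h.hasDerivAt_rho hy hz).smul (h.hasDerivAt_e2 hy hz)).congr_deriv ?_
  have hρ := h.rho_ne_zero
  simp only [Nv, Bv, eqT]
  match_scalars <;> field_simp

theorem hasDerivAt_Bv (h : IsAdmissibleAt y z ε x)
    (hy : DifferentiableAt ℝ (deriv (deriv y)) x) (hz : DifferentiableAt ℝ (deriv (deriv z)) x) :
    HasDerivAt (Bv y z ε)
      ((rho y z x)⁻¹ • (eqT y z x • Nv y z x + eqK y z x • Bv y z ε x)) x := by
  refine ((h.hasDerivAt_rho hy hz).smul (h.hasDerivAt_e3 hy hz)).congr_deriv ?_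
  have hρ := h.rho_ne_zero
  simp only [Nv, Bv, eqT]
  match_scalars <;> field_simp

theorem hasDerivAt_zpow_rho_smul {f g : ℝ → ℝ} (h : IsAdmissibleAt y z ε x)
    (hy : DifferentiableAt ℝ (deriv (deriv y)) x) (hz : DifferentiableAt ℝ (deriv (deriv z)) x)
    (hf : DifferentiableAt ℝ f x) (hg : DifferentiableAt ℝ g x) (n : ℤ) :
    HasDerivAt (fun t => rho y z t ^ n • (f t • Nv y z t + g t • Bv y z ε t))
      (rho y z x ^ (n - 1) •
        ((eqD y z f x + (n + 1) * eqK y z x * f x + eqT y z x * g x) • Nv y z x +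
          (eqD y z g x + (n + 1) * eqK y z x * g x + eqT y z x * f x) • Bv y z ε x)) x := by
  have hρ := h.rho_ne_zero
  have hpow := (hasDerivAt_zpow n _ (.inl hρ)).comp x (h.hasDerivAt_rho hy hz)
  have hframe := (hf.hasDerivAt.smul (h.hasDerivAt_Nv hy hz)).add
    (hg.hasDerivAt.smul (h.hasDerivAt_Bv hy hz))
  refine (hpow.smul hframe).congr_deriv ?_
  simp only [Function.comp_apply, Pi.add_apply, Pi.smul_apply', eqD, smul_eq_mul,
    zpow_sub_one₀ hρ]
  match_scalars <;> field_simp <;> ring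

theorem hasDerivAt_Q1 (h : IsAdmissibleAt y z ε x)
    (hy : DifferentiableAt ℝ (deriv (deriv y)) x) (hz : DifferentiableAt ℝ (deriv (deriv z)) x) :
    HasDerivAt (Q1 y z) (Q2 y z ε x) x := by
  have hQ1 : Q1 y z =
      fun t => rho y z t ^ (-2 : ℤ) • ((1 : ℝ) • Nv y z t + (0 : ℝ) • Bv y z ε t) := by
    ext1 t
    rw [Q1, one_smul, zero_smul, add_zero]
  rw [hQ1]
  refine (h.hasDerivAt_zpow_rho_smul hy hz (differentiableAt_const 1)
    (differentiableAt_const 0) (-2)).congr_deriv ?_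
  norm_num [Q2, eqD]

theorem hasDerivAt_Q2 (h : IsAdmissibleAt y z ε x)
    (hy : ContDiffAt ℝ 2 (deriv (deriv y)) x) (hz : ContDiffAt ℝ 2 (deriv (deriv z)) x) :
    HasDerivAt (Q2 y z ε) (Q3 y z ε x) x := by
  have hy₂ := hy.differentiableAt two_ne_zero
  have hz₂ := hz.differentiableAt two_ne_zero
  have hK := h.differentiableAt_eqK hy hz
  have hT := h.differentiableAt_eqT hy hz
  refine (h.hasDerivAt_zpow_rho_smul hy₂ hz₂ hK.neg hT (-3)).congr_deriv ?_
  have hneg : eqD y z (-eqK y z) x = -eqD y z (eqK y z) x := by simp [eqD, deriv.neg]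
  rw [hneg, Q3]
  simp only [Pi.neg_apply, Int.cast_neg, Int.cast_ofNat, Int.reduceNeg, Int.reduceSub]
  match_scalars <;> ring

end IsAdmissibleAt

lemma deriv_curve (hy : DifferentiableAt ℝ y x) (hz : DifferentiableAt ℝ z x) :
    deriv (fun t => ((t, y t, z t) : V3)) x = e1 y z x :=
  ((hasDerivAt_id x).prodMk (hy.hasDerivAt.prodMk hz.hasDerivAt)).deriv

theorem IsAdmissibleAt.hasDerivAt_e1 (h : IsAdmissibleAt y z ε x)
    (hy : DifferentiableAt ℝ (deriv y) x) (hz : DifferentiableAt ℝ (deriv z) x) :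
    HasDerivAt (e1 y z) (Q1 y z x) x := by
  refine ((hasDerivAt_const x (1 : ℝ)).prodMk
    (hy.hasDerivAt.prodMk hz.hasDerivAt)).congr_deriv ?_
  have hκ := h.curv_pos.ne'
  simp only [Q1, Nv, e2, rho, Prod.smul_mk, smul_eq_mul, mul_zero]
  congr 2 <;> field_simp

theorem IsAdmissibleAt.eventually_contDiffAt {n : WithTop ℕ∞} (h : IsAdmissibleAt y z ε x)
    (hy : ContDiffAt ℝ n y x) (hz : ContDiffAt ℝ n z x) (hn : 2 ≤ n) (hn' : n ≠ (⊤ : ℕ∞)) :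
    ∀ᶠ t in 𝓝 x, IsAdmissibleAt y z ε t ∧ ContDiffAt ℝ n y t ∧ ContDiffAt ℝ n z t :=
  (h.eventually (contDiffAt_deriv_deriv (m := 0) hy (by simpa)).continuousAt
    (contDiffAt_deriv_deriv (m := 0) hz (by simpa)).continuousAt).and
    ((hy.eventually hn').and (hz.eventually hn'))

theorem deriv_deriv_curve (h : IsAdmissibleAt y z ε x)
    (hy : ContDiffAt ℝ 2 y x) (hz : ContDiffAt ℝ 2 z x) :
    deriv (deriv (fun t => ((t, y t, z t) : V3))) x = Q1 y z x := by
  have hγ : deriv (fun t => ((t, y t, z t) : V3)) =ᶠ[𝓝 x] e1 y z :=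
    (h.eventually_contDiffAt hy hz le_rfl (by simp)).mono fun _ ⟨_, hyt, hzt⟩ =>
      deriv_curve (hyt.differentiableAt two_ne_zero) (hzt.differentiableAt two_ne_zero)
  rw [hγ.deriv_eq]
  exact (h.hasDerivAt_e1
    ((hy.derivWithin (m := 1) (by norm_num)).differentiableAt one_ne_zero)
    ((hz.derivWithin (m := 1) (by norm_num)).differentiableAt one_ne_zero)).deriv

theorem deriv_deriv_deriv_curve (h : IsAdmissibleAt y z ε x)
    (hy : ContDiffAt ℝ 3 y x) (hz : ContDiffAt ℝ 3 z x) :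
    deriv (deriv (deriv (fun t => ((t, y t, z t) : V3)))) x = Q2 y z ε x := by
  have hγ : deriv (deriv (fun t => ((t, y t, z t) : V3))) =ᶠ[𝓝 x] Q1 y z :=
    (h.eventually_contDiffAt hy hz (by norm_num) (by simp)).mono fun _ ⟨ht, hyt, hzt⟩ =>
      deriv_deriv_curve ht (hyt.of_le (by norm_num)) (hzt.of_le (by norm_num))
  rw [hγ.deriv_eq]
  exact (h.hasDerivAt_Q1
    ((contDiffAt_deriv_deriv (m := 1) hy (by norm_num)).differentiableAt one_ne_zero)
    ((contDiffAt_deriv_deriv (m := 1) hz (by norm_num)).differentiableAt one_ne_zero)).deriv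

theorem pg_fourth_derivative_general (h : IsAdmissibleAt y z ε x)
    (hy : ContDiffAt ℝ 4 y x) (hz : ContDiffAt ℝ 4 z x) :
    deriv (deriv (deriv (deriv (fun t => ((t, y t, z t) : V3))))) x = Q3 y z ε x := by
  have hγ : deriv (deriv (deriv (fun t => ((t, y t, z t) : V3)))) =ᶠ[𝓝 x] Q2 y z ε :=
    (h.eventually_contDiffAt hy hz (by norm_num) (by simp)).mono fun _ ⟨ht, hyt, hzt⟩ =>
      deriv_deriv_deriv_curve ht (hyt.of_le (by norm_num)) (hzt.of_le (by norm_num))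
  rw [hγ.deriv_eq]
  exact (h.hasDerivAt_Q2 (contDiffAt_deriv_deriv hy (by norm_num))
    (contDiffAt_deriv_deriv hz (by norm_num))).deriv

end FourthDerivative

/-- the fourth arclength derivative satisfies
`γ'''' = ρ⁻⁴·[(2𝒦² + 𝒯² − 𝒦°)N + (𝒯° − 3𝒦𝒯)B]`. -/
theorem pg_fourth_derivative (I : Set ℝ) (y z : ℝ → ℝ) (ε : ℝ)
    (hI : IsOpen I) (hy : ContDiff ℝ (⊤ : ℕ∞) y) (hz : ContDiff ℝ (⊤ : ℕ∞) z)
    (hadm : ∀ x ∈ I, (deriv (deriv y) x) ^ 2 - (deriv (deriv z) x) ^ 2 ≠ 0)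
    (hε : ε = 1 ∨ ε = -1)
    (hsign : ∀ x ∈ I, 0 < ε * ((deriv (deriv y) x) ^ 2 - (deriv (deriv z) x) ^ 2)) :
    ∀ x ∈ I,
      deriv (deriv (deriv (deriv (fun t => ((t, y t, z t) : V3))))) x =
        ((rho y z x) ^ (-4 : ℤ)) •
          ((2 * (eqK y z x) ^ 2 + (eqT y z x) ^ 2 - eqD y z (eqK y z) x) • Nv y z x +
            (eqD y z (eqT y z) x - 3 * eqK y z x * eqT y z x) • Bv y z ε x) := by
  intro x hx
  exact pg_fourth_derivative_general ⟨hε, hsign x hx⟩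
    (contDiff_infty.1 hy 4).contDiffAt (contDiff_infty.1 hz 4).contDiffAt
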